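/- arXiv:math/0403032 — 8 statements merged into one kernel-verified Lean document; each statement's English description precedes it below -/
import Mathlib

section
/- Let K be a field of characteristic zero, V a finite-dimensional K-vector space with a non-degenerate alternating bilinear form h, and A an automorphism of V that is self-adjoint with respect to h, i.e. h(Ax,y) = h(x,Ay) for all x,y ∈ V. Then there exists an automorphism B of V such that h(Ax,y) = h(Bx,By) for all x,y ∈ V (that is, A = B̂B where B̂ is the adjoint of B with respect to h). -/
theorem altAux_split {K V : Type*} [Field K]
    [AddCommGroup V] [Module K V]
    (g : LinearMap.BilinForm K V) (halt : ∀ x, g x x = 0)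
    (hnd : ∀ x, (∀ y, g x y = 0) → x = 0) (hV : Nontrivial V) :
    ∃ (U : Submodule K V) (E : V ≃ₗ[K] (K × K) × U),
      (∀ x : U, (∀ y : U, g x y = 0) → x = 0) ∧
      ∀ x y, g x y = (E x).1.1 * (E y).1.2 - (E x).1.2 * (E y).1.1
        + g (E x).2 (E y).2 := by
  have hsk : ∀ x y, g x y = - g y x := by
    intro x y
    have := halt (x + y)
    simp only [map_add, LinearMap.add_apply, halt] at this
    linear_combination this
  obtain ⟨e, he⟩ := exists_ne (0 : V)
  have h1 : ∃ y, g e y ≠ 0 := by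
    by_contra hc
    push Not at hc
    exact he (hnd e hc)
  obtain ⟨y, hy⟩ := h1
  obtain ⟨f, hf⟩ : ∃ f, g e f = 1 := ⟨(g e y)⁻¹ • y, by simp [hy]⟩
  have hfe : g f e = -1 := by rw [hsk, hf]
  let U : Submodule K V := LinearMap.ker (g e) ⊓ LinearMap.ker (g f)
  have hUe : ∀ u : U, g e u = 0 := fun u => u.2.1
  have hUf : ∀ u : U, g f u = 0 := fun u => u.2.2
  have hUe' : ∀ u : U, g u e = 0 := fun u => by rw [hsk, hUe, neg_zero]
  have hUf' : ∀ u : U, g u f = 0 := fun u => by rw [hsk, hUf, neg_zero]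
  have hmem : ∀ x, x + g f x • e - g e x • f ∈ U := by
    intro x
    constructor
    · simp [halt, hf]
    · simp [halt, hfe]
  let E : V ≃ₗ[K] (K × K) × U :=
    { toFun := fun x => ((- g f x, g e x), ⟨x + g f x • e - g e x • f, hmem x⟩)
      map_add' := by
        intro x y
        ext
        · simp; ring
        · simp
        · simp; module
      map_smul' := by
        intro c x
        ext
        · simp
        · simp
        · simp; module
      invFun := fun p => p.1.1 • e + p.1.2 • f + (p.2 : V)
      left_inv := by
        intro x
        simp
      right_inv := by
        rintro ⟨⟨a, b⟩, u⟩
        ext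
        · simp [halt, hfe, hUf]
        · simp [halt, hf, hUe]
        · simp [halt, hf, hfe, hUe, hUf]; abel }
  have key : ∀ x y, g x y = (E x).1.1 * (E y).1.2 - (E x).1.2 * (E y).1.1
        + g (E x).2 (E y).2 := by
    intro x y
    have hx : x = (E x).1.1 • e + (E x).1.2 • f + ((E x).2 : V) := (E.left_inv x).symm
    have hy : y = (E y).1.1 • e + (E y).1.2 • f + ((E y).2 : V) := (E.left_inv y).symm
    conv_lhs => rw [hx, hy]
    simp only [map_add, LinearMap.add_apply, map_smul, LinearMap.smul_apply, halt, hf, hfe,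
      hUe, hUf, hUe', hUf', smul_eq_mul]
    ring
  refine ⟨U, E, ?_, key⟩
  intro x hx
  apply Subtype.ext
  apply hnd
  intro y
  have hy : y = (E y).1.1 • e + (E y).1.2 • f + ((E y).2 : V) := (E.left_inv y).symm
  rw [hy]
  simp [hUe', hUf', hx]

theorem altAux_isom {K : Type*} [Field K] (n : ℕ) :
    ∀ {V W : Type _} [AddCommGroup V] [Module K V] [FiniteDimensional K V]
    [AddCommGroup W] [Module K W] [FiniteDimensional K W]
    (g : LinearMap.BilinForm K V) (h : LinearMap.BilinForm K W)
    (_ : ∀ x, g x x = 0) (_ : ∀ x, h x x = 0)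
    (_ : ∀ x, (∀ y, g x y = 0) → x = 0) (_ : ∀ x, (∀ y, h x y = 0) → x = 0)
    (_ : Module.finrank K V = n) (_ : Module.finrank K W = n),
    ∃ B : V ≃ₗ[K] W, ∀ x y, g x y = h (B x) (B y) := by
  induction n using Nat.strong_induction_on with
  | _ n ih =>
  intro V W _ _ _ _ _ _ g h ga ha gn hn hV hW
  rcases Nat.eq_zero_or_pos n with h0 | hpos
  · refine ⟨LinearEquiv.ofFinrankEq V W (hV.trans hW.symm), ?_⟩
    intro x y
    have : Subsingleton V := Module.finrank_zero_iff.1 (hV.trans h0)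
    rw [Subsingleton.elim x 0]
    simp
  · obtain ⟨U, E, hU, hE⟩ := altAux_split g ga gn (Module.nontrivial_of_finrank_pos (R := K) (by omega))
    obtain ⟨U', E', hU', hE'⟩ := altAux_split h ha hn (Module.nontrivial_of_finrank_pos (R := K) (by omega))
    have d := E.finrank_eq
    have d' := E'.finrank_eq
    simp only [Module.finrank_prod, Module.finrank_self] at d d'
    obtain ⟨B, hB⟩ := ih (n - 2) (by omega) (g.restrict U) (h.restrict U')
      (fun x => ga x) (fun x => ha x) hU hU' (by omega) (by omega)
    refine ⟨E.trans (((LinearEquiv.refl K (K × K)).prodCongr B).trans E'.symm), ?_⟩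
    intro x y
    have hB' : ∀ x y : U, g x y = h (B x) (B y) := hB
    rw [hE, hE', hB']
    simp

/-- A self-adjoint automorphism `A` of a finite-dimensional vector space with a
non-degenerate alternating form `h` can be written as `A = B̂ B` for some automorphism `B`:
there is an automorphism `B` with `h (A x) y = h (B x) (B y)` for all `x, y`. -/
theorem selfAdjoint_eq_adjoint_mul {K V : Type*} [Field K] [CharZero K]
    [AddCommGroup V] [Module K V] [FiniteDimensional K V]
    (h : LinearMap.BilinForm K V) (halt : LinearMap.IsAlt h)
    (hnd : LinearMap.BilinForm.Nondegenerate h)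
    (A : V ≃ₗ[K] V) (hsa : ∀ x y, h (A x) y = h x (A y)) :
    ∃ B : V ≃ₗ[K] V, ∀ x y, h (A x) y = h (B x) (B y) := by
  have hn : ∀ x, (∀ y, h x y = 0) → x = 0 := hnd.1
  refine altAux_isom (Module.finrank K V) (h.comp A.toLinearMap LinearMap.id) h ?_ halt ?_ hn rfl rfl
  · intro x
    have h1 : h (A x) x = - h x (A x) := (halt.neg (A x) x).symm ▸ by simp [halt.neg]
    have h2 := hsa x x
    have : (2 : K) * h (A x) x = 0 := by linear_combination h1 + h2
    simpa using this
  · intro x hx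
    have : A x = 0 := hn _ hx
    simpa using this
end

section
/- Let G be a finite group, M a finite-dimensional real representation of G, and W a symplectic representation of G, i.e. a finite-dimensional complex representation of G carrying a non-degenerate G-invariant alternating bilinear form. Then the complex dimension of the space of G-invariants (M ⊗_ℝ W)^G, where G acts diagonally on M ⊗_ℝ W, is even. -/
open scoped TensorProduct

/-- The diagonal `G`-action on `W ⊗[ℝ] M` (W a complex representation, `M` a real
representation) commutes with multiplication by complex scalars (which act via the
`W` factor). -/
theorem tensorMap_smul_c {G W M : Type*} [Group G]
    [AddCommGroup W] [Module ℂ W] [AddCommGroup M] [Module ℝ M]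
    (ρW : Representation ℂ G W) (ρM : Representation ℝ G M)
    (g : G) (c : ℂ) (x : W ⊗[ℝ] M) :
    TensorProduct.map ((ρW g).restrictScalars ℝ) (ρM g) (c • x)
      = c • TensorProduct.map ((ρW g).restrictScalars ℝ) (ρM g) x := by
  induction x using TensorProduct.induction_on with
  | zero => simp
  | tmul w m =>
      rw [TensorProduct.smul_tmul', TensorProduct.map_tmul, TensorProduct.map_tmul,
        TensorProduct.smul_tmul']
      simp
  | add a b ha hb => rw [smul_add, map_add, ha, hb, map_add, smul_add]

/-- The complex subspace `(W ⊗_ℝ M)^G` of invariants of the diagonal action on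
`W ⊗[ℝ] M`, where `W` is a complex representation and `M` a real representation of `G`,
and ℂ acts through the factor `W`. -/
def diagInvariantsC {G W M : Type*} [Group G]
    [AddCommGroup W] [Module ℂ W] [AddCommGroup M] [Module ℝ M]
    (ρW : Representation ℂ G W) (ρM : Representation ℝ G M) :
    Submodule ℂ (W ⊗[ℝ] M) where
  carrier := {x | ∀ g : G, TensorProduct.map ((ρW g).restrictScalars ℝ) (ρM g) x = x}
  add_mem' := by
    intro a b ha hb g
    rw [map_add, ha g, hb g]
  zero_mem' := by intro g; simp
  smul_mem' := by
    intro c x hx g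
    rw [tensorMap_smul_c, hx g]

/-- A space with a left-separating alternating form has even dimension. -/
theorem even_finrank_of_alt_aux {V : Type*} [AddCommGroup V] [Module ℂ V]
    [FiniteDimensional ℂ V] (B : LinearMap.BilinForm ℂ V) (halt : ∀ x, B x x = 0)
    (hnd : ∀ x, (∀ y, B x y = 0) → x = 0) : Even (Module.finrank ℂ V) := by
  have hA : LinearMap.IsAlt B := halt
  have hN : B.Nondegenerate :=
    (LinearMap.IsRefl.nondegenerate_iff_separatingLeft hA.isRefl).2 hnd
  let b := Module.finBasis ℂ V
  have hdet := (LinearMap.BilinForm.nondegenerate_iff_det_ne_zero b).1 hN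
  set A := LinearMap.BilinForm.toMatrix b B with hAdef
  have hT : A.transpose = -A := by
    ext i j
    simp only [Matrix.transpose_apply, Matrix.neg_apply, hAdef,
      LinearMap.BilinForm.toMatrix_apply]
    exact (hA.neg _ _).symm
  have h1 : A.det = (-1) ^ (Module.finrank ℂ V) * A.det := by
    conv_lhs => rw [← Matrix.det_transpose, hT, Matrix.det_neg, Fintype.card_fin]
  by_contra ho
  rw [Nat.not_even_iff_odd] at ho
  rw [ho.neg_one_pow] at h1
  apply hdet
  linear_combination h1 / 2

/-- A finite-dimensional real representation of a finite group has an invariant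
symmetric nondegenerate form. -/
theorem exists_invariant_form_aux {G M : Type*} [Group G] [Fintype G]
    [AddCommGroup M] [Module ℝ M] [FiniteDimensional ℝ M] (ρM : Representation ℝ G M) :
    ∃ b : LinearMap.BilinForm ℝ M, (∀ x y, b x y = b y x) ∧ b.Nondegenerate ∧
      ∀ (g : G) (x y : M), b (ρM g x) (ρM g y) = b x y := by
  let c := Module.finBasis ℝ M
  let b₀ : LinearMap.BilinForm ℝ M := ∑ i, LinearMap.BilinForm.linMulLin (c.coord i) (c.coord i)
  have hb₀ : ∀ x y, b₀ x y = ∑ i, c.repr x i * c.repr y i := by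
    intro x y
    simp [b₀, LinearMap.sum_apply]
  let b : LinearMap.BilinForm ℝ M := ∑ g : G, b₀.comp (ρM g) (ρM g)
  have hb : ∀ x y, b x y = ∑ g : G, b₀ (ρM g x) (ρM g y) := by
    intro x y
    simp [b, LinearMap.sum_apply]
  have hs : ∀ x y, b x y = b y x := by
    intro x y
    simp only [hb, hb₀, mul_comm]
  refine ⟨b, hs, ?_, ?_⟩
  · have hr : LinearMap.IsRefl b := fun x y h => by rw [hs]; exact h
    refine (LinearMap.IsRefl.nondegenerate_iff_separatingLeft hr).2 ?_
    intro x hx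
    have h := hx x
    have hnn : ∀ y, 0 ≤ b₀ y y := fun y => by
      rw [hb₀]; exact Finset.sum_nonneg fun i _ => mul_self_nonneg _
    rw [hb, Finset.sum_eq_zero_iff_of_nonneg (fun g _ => hnn _)] at h
    have h1 := h 1 (Finset.mem_univ _)
    rw [map_one, hb₀, Finset.sum_eq_zero_iff_of_nonneg (fun g _ => mul_self_nonneg _)] at h1
    apply c.ext_elem
    intro i
    simpa using h1 i (Finset.mem_univ _)
  · intro g x y
    rw [hb, hb]
    refine Fintype.sum_equiv (Equiv.mulRight g) _ _ ?_
    intro h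
    simp

/-- If `M` is a finite-dimensional real representation of a finite group `G` and `W` is a
symplectic complex representation of `G` (i.e. it carries a non-degenerate `G`-invariant
alternating bilinear form), then the complex dimension of `(M ⊗_ℝ W)^G` is even. -/
theorem even_finrank_invariants_of_symplectic {G W M : Type*} [Group G] [Fintype G]
    [AddCommGroup W] [Module ℂ W] [FiniteDimensional ℂ W]
    [AddCommGroup M] [Module ℝ M] [FiniteDimensional ℝ M]
    (ρW : Representation ℂ G W) (ρM : Representation ℝ G M)
    (κ : LinearMap.BilinForm ℂ W) (hκalt : LinearMap.IsAlt κ)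
    (hκnd : LinearMap.BilinForm.Nondegenerate κ)
    (hκinv : ∀ (g : G) (x y : W), κ (ρW g x) (ρW g y) = κ x y) :
    Even (Module.finrank ℂ (diagInvariantsC ρW ρM)) := by
  classical
  obtain ⟨b, hbs, hbn, hbi⟩ := exists_invariant_form_aux ρM
  let B : LinearMap.BilinForm ℂ (W ⊗[ℝ] M) := LinearMap.BilinForm.tmul κ b
  have hB : ∀ w m w' m', B (w ⊗ₜ m) (w' ⊗ₜ m') = b m m' • κ w w' := fun w m w' m' => rfl
  have hBskew : ∀ x y, B x y = - B y x := by
    intro x y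
    induction x using TensorProduct.induction_on with
    | zero => simp
    | add x₁ x₂ h₁ h₂ => simp only [map_add, LinearMap.add_apply, h₁, h₂, neg_add]
    | tmul w m =>
      induction y using TensorProduct.induction_on with
      | zero => simp
      | add x₁ x₂ h₁ h₂ => simp only [map_add, LinearMap.add_apply, h₁, h₂, neg_add]
      | tmul w' m' => rw [hB, hB, hbs, ← hκalt.neg w' w, smul_neg]
  let T : G → W ⊗[ℝ] M →ₗ[ℝ] W ⊗[ℝ] M := fun g =>
    TensorProduct.map ((ρW g).restrictScalars ℝ) (ρM g)
  have hT : ∀ g w m, T g (w ⊗ₜ m) = ρW g w ⊗ₜ ρM g m := fun g w m => rfl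
  have hTmul : ∀ g h x, T g (T h x) = T (g * h) x := by
    intro g h x
    induction x using TensorProduct.induction_on with
    | zero => simp
    | add x₁ x₂ h₁ h₂ => simp only [map_add, h₁, h₂]
    | tmul w m => simp [hT]
  have hBinv : ∀ g x y, B (T g x) (T g y) = B x y := by
    intro g x y
    induction x using TensorProduct.induction_on with
    | zero => simp
    | add x₁ x₂ h₁ h₂ => simp only [map_add, LinearMap.add_apply, h₁, h₂]
    | tmul w m =>
      induction y using TensorProduct.induction_on with
      | zero => simp
      | add x₁ x₂ h₁ h₂ => simp only [map_add, h₁, h₂]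
      | tmul w' m' => rw [hT, hT, hB, hB, hbi, hκinv]
  have hBnd : ∀ x, (∀ y, B x y = 0) → x = 0 := by
    intro x hx
    let c := Module.finBasis ℝ M
    let d := LinearMap.BilinForm.dualBasis b hbn c
    have key : ∀ (j) (w' : W) (x : W ⊗[ℝ] M),
        κ (TensorProduct.equivFinsuppOfBasisRight d x j) w' = B x (w' ⊗ₜ c j) := by
      intro j w' x
      induction x using TensorProduct.induction_on with
      | zero => simp
      | add x₁ x₂ h₁ h₂ => simp only [map_add, Finsupp.add_apply, LinearMap.add_apply, h₁, h₂]
      | tmul w m =>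
        rw [TensorProduct.equivFinsuppOfBasisRight_apply_tmul_apply, hB,
          LinearMap.BilinForm.dualBasis_repr_apply, ← Complex.coe_smul, ← Complex.coe_smul,
          map_smul, LinearMap.smul_apply]
    apply (TensorProduct.equivFinsuppOfBasisRight d).injective
    rw [map_zero]
    ext j
    apply hκnd.1
    intro w'
    rw [key, hx]
  have : FiniteDimensional ℂ (W ⊗[ℝ] M) :=
    Module.Finite.of_basis
      ((Module.finBasis ℂ W).tensorProduct (Module.finBasis ℝ M))
  let R : LinearMap.BilinForm ℂ (diagInvariantsC ρW ρM) := B.restrict _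
  refine even_finrank_of_alt_aux R ?_ ?_
  · intro x
    have h := hBskew x x
    change B x x = 0
    linear_combination h / 2
  · rintro ⟨x, hx⟩ h
    have hx' : ∀ g, T g x = x := hx
    rw [Submodule.mk_eq_zero]
    apply hBnd
    intro z
    have hz : (∑ g, T g z) ∈ diagInvariantsC ρW ρM := by
      intro h
      change T h _ = _
      rw [map_sum]
      exact Fintype.sum_equiv (Equiv.mulLeft h) _ _ (fun g => hTmul h g z)
    have h2 : B x (∑ g, T g z) = 0 := h ⟨_, hz⟩
    have h3 : ∀ g, B x (T g z) = B x z := fun g => by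
      conv_lhs => rw [← hx' g]
      exact hBinv g x z
    rw [map_sum, Finset.sum_congr rfl (fun g _ => h3 g), Finset.sum_const, nsmul_eq_mul] at h2
    refine (mul_eq_zero.1 h2).resolve_left ?_
    simp [Finset.card_univ]
end

section
/- Let G be a finite group, U a free ℝ[G]-module with a G-invariant real-valued symmetric bilinear form σ, and W a finite-dimensional complex representation of G with a G-invariant alternating bilinear form κ. Let σ ⊗ κ be the form on U ⊗_ℝ W determined by (σ⊗κ)(u⊗w, u'⊗w') = σ(u,u')κ(w,w'), let r_G(u⊗w) = ∑_{g∈G} gu ⊗ gw, and let σ̃(u,u') = ∑_{g∈G} σ(gu,u') g^{-1} ∈ ℝ[G]. Then for all u, u' ∈ U and w, w' ∈ W: (σ⊗κ)(r_G(u⊗w), r_G(u'⊗w')) = |G| · κ(w, σ̃(u,u')·w'), where σ̃(u,u') acts on w' through the ℂ[G]-module structure of W. -/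
open scoped TensorProduct

/-- Let `G` be a finite group, `U` a free `ℝ[G]`-module with a non-degenerate `G`-invariant
real-valued symmetric bilinear form `σ`, and `W` a complex representation of `G` with a
`G`-invariant alternating bilinear form `κ`.  Then, for the averaging map
`r_G(w ⊗ u) = ∑_g (g w) ⊗ (g u)` and the group-ring valued form
`σ̃(u,u') = ∑_g σ(gu,u') g⁻¹`, one has
`(σ ⊗ κ)(r_G(u ⊗ w), r_G(u' ⊗ w')) = |G| ⬝ κ(w, σ̃(u,u')·w')`. -/
theorem form_on_averages {G U W : Type*} [Group G] [Fintype G]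
    [AddCommGroup U] [Module ℝ U] [AddCommGroup W] [Module ℂ W] [FiniteDimensional ℂ W]
    (ρU : Representation ℝ G U) (ρW : Representation ℂ G W)
    (hUfree : ∃ (q : ℕ) (u₀ : Fin q → U),
      LinearIndependent ℝ (fun p : Fin q × G => ρU p.2 (u₀ p.1)) ∧
      Submodule.span ℝ (Set.range fun p : Fin q × G => ρU p.2 (u₀ p.1)) = ⊤)
    (σ : LinearMap.BilinForm ℝ U)
    (hσsymm : ∀ x y, σ x y = σ y x)
    (hσnd : LinearMap.BilinForm.Nondegenerate σ)
    (hσinv : ∀ (g : G) (x y : U), σ (ρU g x) (ρU g y) = σ x y)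
    (κ : LinearMap.BilinForm ℂ W) (hκalt : LinearMap.IsAlt κ)
    (hκinv : ∀ (g : G) (x y : W), κ (ρW g x) (ρW g y) = κ x y)
    (rG : W ⊗[ℝ] U → W ⊗[ℝ] U)
    (hrG : ∀ x, rG x = ∑ g : G,
      TensorProduct.map ((ρW g).restrictScalars ℝ) (ρU g) x) :
    ∀ (u u' : U) (w w' : W),
      LinearMap.BilinForm.tmul κ σ (rG (w ⊗ₜ[ℝ] u)) (rG (w' ⊗ₜ[ℝ] u'))
        = (Fintype.card G : ℂ) *
            κ w (∑ g : G, ((σ (ρU g u) u' : ℝ) : ℂ) • ρW g⁻¹ w') := by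
  intro u u' w w'
  have key : ∀ g : G, ∑ h : G, κ (ρW g w) (ρW h w') * ((σ (ρU g u) (ρU h u') : ℝ) : ℂ)
      = ∑ k : G, κ w (ρW k⁻¹ w') * ((σ (ρU k u) u' : ℝ) : ℂ) := by
    intro g
    symm
    refine Fintype.sum_equiv ((Equiv.inv G).trans (Equiv.mulLeft g)) _ _ ?_
    intro k
    have e1 : ρW (g * k⁻¹) w' = ρW g (ρW k⁻¹ w') := by rw [map_mul]; rfl
    have e2 : ρU (g * k⁻¹) u' = ρU g (ρU k⁻¹ u') := by rw [map_mul]; rfl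
    have e3 : ρU k (ρU k⁻¹ u') = u' := by
      rw [← Module.End.mul_apply, ← map_mul, mul_inv_cancel, map_one, Module.End.one_apply]
    simp only [Equiv.trans_apply, Equiv.inv_apply, Equiv.coe_mulLeft]
    rw [e1, e2, hκinv, hσinv, ← hσinv k u, e3]
  have lhs : LinearMap.BilinForm.tmul κ σ (rG (w ⊗ₜ[ℝ] u)) (rG (w' ⊗ₜ[ℝ] u'))
      = ∑ g : G, ∑ h : G, κ (ρW g w) (ρW h w') * ((σ (ρU g u) (ρU h u') : ℝ) : ℂ) := by
    rw [hrG, hrG]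
    simp only [TensorProduct.map_tmul, LinearMap.restrictScalars_apply, map_sum,
      LinearMap.sum_apply]
    rw [Finset.sum_comm]
    refine Finset.sum_congr rfl fun g _ => Finset.sum_congr rfl fun h _ => ?_
    simp [LinearMap.BilinForm.tmul, LinearMap.BilinForm.tensorDistrib_tmul, mul_comm]
  rw [lhs, Finset.sum_congr rfl fun g _ => key g]
  simp [map_sum, mul_comm]
end

section
/- Let G be a finite group, M a finite-dimensional real representation of G, and σ a non-degenerate G-invariant symmetric bilinear form on M. Then there exist G-invariant subspaces M^+ and M^- of M such that M = M^+ ⊕ M^-, σ is positive definite on M^+, and σ is negative definite on M^-. -/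
theorem aux_inner {G M : Type*} [Group G]
    [NormedAddCommGroup M] [InnerProductSpace ℝ M] [FiniteDimensional ℝ M]
    (ρ : Representation ℝ G M) (σ : LinearMap.BilinForm ℝ M)
    (hinner : ∀ (g : G) (x y : M), inner ℝ (ρ g x) (ρ g y) = inner ℝ x y)
    (hσsymm : ∀ x y, σ x y = σ y x)
    (hσnd : ∀ x, (∀ y, σ x y = 0) → x = 0)
    (hσinv : ∀ (g : G) (x y : M), σ (ρ g x) (ρ g y) = σ x y) :
    ∃ P N : Submodule ℝ M,
      (∀ g : G, ∀ x ∈ P, ρ g x ∈ P) ∧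
      (∀ g : G, ∀ x ∈ N, ρ g x ∈ N) ∧
      IsCompl P N ∧
      (∀ x ∈ P, x ≠ 0 → 0 < σ x x) ∧
      (∀ x ∈ N, x ≠ 0 → σ x x < 0) := by
  classical
  have hgi : ∀ (g : G) (x : M), ρ g (ρ g⁻¹ x) = x := fun g x => by
    rw [← Module.End.mul_apply, ← map_mul]; simp
  let T : M →ₗ[ℝ] M :=
    { toFun := fun x => (InnerProductSpace.toDual ℝ M).symm (LinearMap.toContinuousLinearMap (σ x))
      map_add' := fun x y => by simp
      map_smul' := fun c x => by simp }
  have hT : ∀ x y, inner ℝ (T x) y = σ x y := fun x y => by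
    simp [T, InnerProductSpace.toDual_symm_apply]
  have hsymm : T.IsSymmetric := fun x y => by
    rw [hT, real_inner_comm, hT, hσsymm]
  have hTinv : ∀ g x, T (ρ g x) = ρ g (T x) := fun g x => by
    refine ext_inner_right ℝ fun y => ?_
    rw [hT, ← hgi g y, hσinv, hinner, hT]
  let E : (ℝ → Prop) → Submodule ℝ M := fun p =>
    { carrier := {x | ∀ μ, p μ → ∀ e, T e = μ • e → inner ℝ e x = 0}
      zero_mem' := fun μ _ e _ => by simp
      add_mem' := fun {a b} ha hb μ hμ e he => by
        rw [inner_add_right, ha μ hμ e he, hb μ hμ e he, add_zero]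
      smul_mem' := fun c a ha μ hμ e he => by
        rw [inner_smul_right, ha μ hμ e he, mul_zero] }
  have hEinv : ∀ p g, ∀ x ∈ E p, ρ g x ∈ E p := by
    intro p g x hx μ hμ e he
    rw [← hgi g e, hinner]
    exact hx μ hμ _ (by rw [hTinv, he, map_smul])
  let b := hsymm.eigenvectorBasis rfl
  let l := hsymm.eigenvalues rfl
  have hb : ∀ i, T (b i) = l i • b i := fun i =>
    hsymm.apply_eigenvectorBasis rfl i
  have hl : ∀ i, l i ≠ 0 := fun i h0 => by
    have h1 : b i = 0 := hσnd _ fun y => by rw [← hT, hb, h0]; simp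
    have h2 := b.orthonormal.1 i
    rw [h1] at h2; simp at h2
  have hexp : ∀ x, σ x x = ∑ i, l i * (inner ℝ (b i) x) ^ 2 := fun x => by
    rw [← hT, ← b.sum_inner_mul_inner]
    refine Finset.sum_congr rfl fun i _ => ?_
    rw [hsymm x (b i), hb, inner_smul_right, real_inner_comm]; ring
  have hne : ∀ x, x ≠ 0 → ∃ i, inner ℝ (b i) x ≠ 0 := fun x hx => by
    by_contra! h
    apply hx
    rw [← b.sum_repr' x]
    simp [h]
  have hpos : ∀ x ∈ E (fun μ => μ < 0), x ≠ 0 → 0 < σ x x := by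
    intro x hx hx0
    have key : ∀ i, inner ℝ (b i) x ≠ 0 → 0 < l i := fun i hi => by
      rcases lt_or_gt_of_ne (hl i) with h | h
      · exact absurd (hx _ h _ (hb i)) hi
      · exact h
    rw [hexp]
    obtain ⟨i, hi⟩ := hne x hx0
    refine Finset.sum_pos' (fun j _ => ?_) ⟨i, Finset.mem_univ _, ?_⟩
    · by_cases hj : inner ℝ (b j) x = 0
      · simp [hj]
      · have := key j hj; positivity
    · have := key i hi; positivity
  have hneg : ∀ x ∈ E (fun μ => 0 < μ), x ≠ 0 → σ x x < 0 := by
    intro x hx hx0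
    have key : ∀ i, inner ℝ (b i) x ≠ 0 → 0 < - l i := fun i hi => by
      rcases lt_or_gt_of_ne (hl i) with h | h
      · linarith
      · exact absurd (hx _ h _ (hb i)) hi
    rw [← neg_pos, hexp, ← Finset.sum_neg_distrib]
    simp_rw [← neg_mul]
    obtain ⟨i, hi⟩ := hne x hx0
    refine Finset.sum_pos' (fun j _ => ?_) ⟨i, Finset.mem_univ _, ?_⟩
    · by_cases hj : inner ℝ (b j) x = 0
      · simp [hj]
      · have := key j hj; positivity
    · have := key i hi; positivity
  have hmem : ∀ (p : ℝ → Prop) i, ¬ p (l i) → b i ∈ E p := by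
    intro p i hi μ hμ e he
    have h := hsymm e (b i)
    rw [he, hb, inner_smul_left, inner_smul_right] at h
    have hd : μ - l i ≠ 0 := fun h0 => hi (by rwa [← sub_eq_zero.1 h0])
    have : (μ - l i) * inner ℝ e (b i) = 0 := by
      simp at h; rw [sub_mul]; simpa [sub_eq_zero] using h
    exact (mul_eq_zero.1 this).resolve_left hd
  refine ⟨E (fun μ => μ < 0), E (fun μ => 0 < μ), hEinv _, hEinv _, ⟨?_, ?_⟩, hpos, hneg⟩
  · rw [Submodule.disjoint_def]
    intro x h1 h2
    by_contra hx
    exact lt_asymm (hpos x h1 hx) (hneg x h2 hx)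
  · rw [codisjoint_iff, eq_top_iff]
    intro x _
    rw [← b.sum_repr' x]
    refine Submodule.sum_mem _ fun i _ => Submodule.smul_mem _ _ ?_
    rcases lt_or_gt_of_ne (hl i) with h | h
    · exact Submodule.mem_sup_right (hmem _ i (not_lt.2 h.le))
    · exact Submodule.mem_sup_left (hmem _ i (not_lt.2 h.le))

/-- A finite-dimensional real representation `M` of a finite group `G` with a
non-degenerate `G`-invariant symmetric bilinear form `σ` decomposes as a direct sum of
`G`-invariant subspaces `M = M⁺ ⊕ M⁻` with `σ` positive definite on `M⁺` and negative
definite on `M⁻`. -/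
theorem exists_invariant_signature_decomposition {G M : Type*} [Group G] [Finite G]
    [AddCommGroup M] [Module ℝ M] [FiniteDimensional ℝ M]
    (ρ : Representation ℝ G M) (σ : LinearMap.BilinForm ℝ M)
    (hσsymm : ∀ x y, σ x y = σ y x)
    (hσnd : LinearMap.BilinForm.Nondegenerate σ)
    (hσinv : ∀ (g : G) (x y : M), σ (ρ g x) (ρ g y) = σ x y) :
    ∃ P N : Submodule ℝ M,
      (∀ g : G, ∀ x ∈ P, ρ g x ∈ P) ∧
      (∀ g : G, ∀ x ∈ N, ρ g x ∈ N) ∧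
      IsCompl P N ∧
      (∀ x ∈ P, x ≠ 0 → 0 < σ x x) ∧
      (∀ x ∈ N, x ≠ 0 → σ x x < 0) := by
  classical
  have := Fintype.ofFinite G
  let e : M ≃ₗ[ℝ] EuclideanSpace ℝ (Fin (Module.finrank ℝ M)) :=
    LinearEquiv.ofFinrankEq _ _ (by simp)
  let c : InnerProductSpace.Core ℝ M :=
    { inner := fun x y => ∑ g : G, inner ℝ (e (ρ g x)) (e (ρ g y))
      conj_inner_symm := fun x y => by
        simp only [map_sum]
        exact Finset.sum_congr rfl fun g _ => by simp [real_inner_comm]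
      re_inner_nonneg := fun x => by
        simp only [RCLike.re_to_real]
        exact Finset.sum_nonneg fun g _ => real_inner_self_nonneg
      add_left := fun x y z => by
        simp [inner_add_left, Finset.sum_add_distrib]
      smul_left := fun x y r => by
        simp [inner_smul_left, Finset.mul_sum]
      definite := fun x h => by
        have h1 := (Finset.sum_eq_zero_iff_of_nonneg
          (fun g _ => real_inner_self_nonneg)).1 h 1 (Finset.mem_univ _)
        simpa using h1 }
  letI : NormedAddCommGroup M := c.toNormedAddCommGroup
  letI : InnerProductSpace ℝ M := InnerProductSpace.ofCore c.toCore
  refine aux_inner ρ σ ?_ hσsymm ?_ hσinv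
  · intro h x y
    change ∑ g : G, inner ℝ (e (ρ g (ρ h x))) (e (ρ g (ρ h y))) =
      ∑ g : G, inner ℝ (e (ρ g x)) (e (ρ g y))
    refine Fintype.sum_equiv (Equiv.mulRight h) _ _ fun g => ?_
    simp
  · intro x hx
    exact hσnd.1 x hx
end

section
/- Let G be a finite group, M a finite-dimensional real representation of G, and σ a non-degenerate G-invariant symmetric bilinear form on M. Suppose M = M_1^+ ⊕ M_1^- and M = M_2^+ ⊕ M_2^- are two decompositions into G-invariant subspaces with σ positive definite on M_1^+ and M_2^+ and negative definite on M_1^- and M_2^-. Then M_1^+ is isomorphic to M_2^+ as a real representation of G, and M_1^- is isomorphic to M_2^- as a real representation of G (i.e., the characters of M^+ and M^- are independent of the choice of decomposition). -/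
theorem sig_aux {G M : Type*} [Group G]
    [AddCommGroup M] [Module ℝ M] [FiniteDimensional ℝ M]
    (ρ : Representation ℝ G M)
    (P₁ N₁ P₂ N₂ : Submodule ℝ M)
    (hP₁ : ∀ g : G, ∀ x ∈ P₁, ρ g x ∈ P₁)
    (hP₂ : ∀ g : G, ∀ x ∈ P₂, ρ g x ∈ P₂) (hN₂ : ∀ g : G, ∀ x ∈ N₂, ρ g x ∈ N₂)
    (hc₁ : IsCompl P₁ N₁) (hc₂ : IsCompl P₂ N₂)
    (h12 : ∀ x ∈ P₁, x ∈ N₂ → x = 0) (h21 : ∀ x ∈ P₂, x ∈ N₁ → x = 0) :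
    ∃ e : P₁ ≃ₗ[ℝ] P₂, ∀ (g : G) (x : M) (hx : x ∈ P₁),
        (e ⟨ρ g x, hP₁ g x hx⟩ : M) = ρ g (e ⟨x, hx⟩) := by
  have inj : ∀ (P N Q : Submodule ℝ M) (hc : IsCompl P N), (∀ x ∈ Q, x ∈ N → x = 0) →
      Function.Injective ((P.projectionOnto N hc).comp Q.subtype) := by
    intro P N Q hc h
    rw [← LinearMap.ker_eq_bot, LinearMap.ker_eq_bot']
    rintro ⟨x, hx⟩ h0
    have : x ∈ N := by
      simpa using h0
    exact Subtype.ext (h x hx this)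
  have i1 := inj P₂ N₂ P₁ hc₂ h12
  have i2 := inj P₁ N₁ P₂ hc₁ h21
  have hd : Module.finrank ℝ P₁ = Module.finrank ℝ P₂ :=
    le_antisymm (LinearMap.finrank_le_finrank_of_injective i1)
      (LinearMap.finrank_le_finrank_of_injective i2)
  refine ⟨LinearEquiv.ofInjectiveOfFinrankEq _ i1 hd, fun g x hx => ?_⟩
  change ((P₂.projectionOnto N₂ hc₂ (ρ g x) : P₂) : M)
    = ρ g (P₂.projectionOnto N₂ hc₂ x : P₂)
  obtain ⟨p, hp, n, hn, rfl⟩ : ∃ p ∈ P₂, ∃ n ∈ N₂, p + n = x :=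
    Submodule.mem_sup.1 (by rw [hc₂.sup_eq_top]; trivial)
  have key : ∀ a ∈ P₂, ∀ b ∈ N₂,
      ((P₂.projectionOnto N₂ hc₂ (a + b) : P₂) : M) = a := by
    intro a ha b hb
    have h1 := Submodule.projectionOnto_apply_left hc₂ ⟨a, ha⟩
    have h2 := Submodule.projectionOnto_apply_right hc₂ ⟨b, hb⟩
    simp only at h1 h2
    rw [map_add, h1, h2, add_zero]
  rw [map_add, key _ (hP₂ g p hp) _ (hN₂ g n hn), key _ hp _ hn]

/-- For a non-degenerate `G`-invariant symmetric form `σ` on a finite-dimensional real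
representation `M` of a finite group `G`, any two decompositions of `M` into a
`G`-invariant positive definite subspace and a `G`-invariant negative definite subspace
have `G`-isomorphic positive parts and `G`-isomorphic negative parts: the characters of
`M⁺` and `M⁻` do not depend on the choice of decomposition. -/
theorem signature_decomposition_unique_up_to_iso {G M : Type*} [Group G] [Finite G]
    [AddCommGroup M] [Module ℝ M] [FiniteDimensional ℝ M]
    (ρ : Representation ℝ G M) (σ : LinearMap.BilinForm ℝ M)
    (hσsymm : ∀ x y, σ x y = σ y x)
    (hσnd : LinearMap.BilinForm.Nondegenerate σ)
    (hσinv : ∀ (g : G) (x y : M), σ (ρ g x) (ρ g y) = σ x y)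
    (P₁ N₁ P₂ N₂ : Submodule ℝ M)
    (hP₁ : ∀ g : G, ∀ x ∈ P₁, ρ g x ∈ P₁) (hN₁ : ∀ g : G, ∀ x ∈ N₁, ρ g x ∈ N₁)
    (hP₂ : ∀ g : G, ∀ x ∈ P₂, ρ g x ∈ P₂) (hN₂ : ∀ g : G, ∀ x ∈ N₂, ρ g x ∈ N₂)
    (hc₁ : IsCompl P₁ N₁) (hc₂ : IsCompl P₂ N₂)
    (hpos₁ : ∀ x ∈ P₁, x ≠ 0 → 0 < σ x x) (hneg₁ : ∀ x ∈ N₁, x ≠ 0 → σ x x < 0)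
    (hpos₂ : ∀ x ∈ P₂, x ≠ 0 → 0 < σ x x) (hneg₂ : ∀ x ∈ N₂, x ≠ 0 → σ x x < 0) :
    (∃ e : P₁ ≃ₗ[ℝ] P₂, ∀ (g : G) (x : M) (hx : x ∈ P₁),
        (e ⟨ρ g x, hP₁ g x hx⟩ : M) = ρ g (e ⟨x, hx⟩)) ∧
    (∃ e : N₁ ≃ₗ[ℝ] N₂, ∀ (g : G) (x : M) (hx : x ∈ N₁),
        (e ⟨ρ g x, hN₁ g x hx⟩ : M) = ρ g (e ⟨x, hx⟩)) := by
  have h : ∀ x : M, (x ≠ 0 → 0 < σ x x) → (x ≠ 0 → σ x x < 0) → x = 0 := by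
    intro x h1 h2
    by_contra hx
    exact lt_asymm (h1 hx) (h2 hx)
  exact ⟨sig_aux ρ P₁ N₁ P₂ N₂ hP₁ hP₂ hN₂ hc₁ hc₂
      (fun x h1 h2 => h x (hpos₁ x h1) (hneg₂ x h2))
      (fun x h1 h2 => h x (hpos₂ x h1) (hneg₁ x h2)),
    sig_aux ρ N₁ P₁ N₂ P₂ hN₁ hN₂ hP₂ hc₁.symm hc₂.symm
      (fun x h1 h2 => h x (hpos₂ x h2) (hneg₁ x h1))
      (fun x h1 h2 => h x (hpos₁ x h2) (hneg₂ x h1))⟩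
end

section
/- Let G be a finite group and V a finite-dimensional real representation of G. Let Hyp(V) = V ⊕ V^D, where V^D is the dual representation ((g·f)(v) = f(g^{-1}v)), equipped with the symmetric bilinear form h(v⊕f, v'⊕f') = f(v') + f'(v); this form is non-degenerate and G-invariant. Then for any decomposition Hyp(V) = P ⊕ N into G-invariant subspaces with h positive definite on P and negative definite on N, both P and N are isomorphic to V as real representations of G: Hyp(V)^+ ≅ V ≅ Hyp(V)^-. -/
/-- The hyperbolic symmetric bilinear form on `V ⊕ V^D`:
`h (v ⊕ f) (v' ⊕ f') = f v' + f' v`. -/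
def hypForm {K V : Type*} [Field K] [AddCommGroup V] [Module K V] :
    (V × Module.Dual K V) → (V × Module.Dual K V) → K :=
  fun x y => x.2 y.1 + y.2 x.1

/-- For a finite-dimensional real representation `V` of a finite group `G`, consider
`Hyp(V) = V ⊕ V^D` with the `G`-action `g ⬝ (v, f) = (g v, f ∘ g⁻¹)` and the hyperbolic
form `h((v,f),(v',f')) = f v' + f' v`.  For any decomposition `Hyp(V) = P ⊕ N` into
`G`-invariant subspaces with `h` positive definite on `P` and negative definite on `N`,
both `P` and `N` are isomorphic to `V` as representations of `G`. -/
theorem hyp_decomposition_parts_iso {G V : Type*} [Group G] [Finite G]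
    [AddCommGroup V] [Module ℝ V] [FiniteDimensional ℝ V]
    (ρ : Representation ℝ G V)
    (P N : Submodule ℝ (V × Module.Dual ℝ V))
    (hPstab : ∀ (g : G), ∀ x ∈ P, ((ρ g x.1, x.2 ∘ₗ ρ g⁻¹) : V × Module.Dual ℝ V) ∈ P)
    (hNstab : ∀ (g : G), ∀ x ∈ N, ((ρ g x.1, x.2 ∘ₗ ρ g⁻¹) : V × Module.Dual ℝ V) ∈ N)
    (hcompl : IsCompl P N)
    (hpos : ∀ x ∈ P, x ≠ (0 : V × Module.Dual ℝ V) → 0 < hypForm x x)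
    (hneg : ∀ x ∈ N, x ≠ (0 : V × Module.Dual ℝ V) → hypForm x x < 0) :
    (∃ e : P ≃ₗ[ℝ] V, ∀ (g : G) (x : V × Module.Dual ℝ V) (hx : x ∈ P),
        e ⟨(ρ g x.1, x.2 ∘ₗ ρ g⁻¹), hPstab g x hx⟩ = ρ g (e ⟨x, hx⟩)) ∧
    (∃ e : N ≃ₗ[ℝ] V, ∀ (g : G) (x : V × Module.Dual ℝ V) (hx : x ∈ N),
        e ⟨(ρ g x.1, x.2 ∘ₗ ρ g⁻¹), hNstab g x hx⟩ = ρ g (e ⟨x, hx⟩)) := by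
  have key : ∀ Q : Submodule ℝ (V × Module.Dual ℝ V),
      (∀ x ∈ Q, x ≠ 0 → hypForm x x ≠ 0) →
      Function.Injective ((LinearMap.fst ℝ V (Module.Dual ℝ V)).comp Q.subtype) := by
    intro Q hQ
    rw [injective_iff_map_eq_zero]
    rintro ⟨x, hx⟩ h
    have h1 : x.1 = 0 := h
    by_contra hne
    refine hQ x hx (fun h0 => hne (Subtype.ext h0)) ?_
    simp [hypForm, h1]
  have iP := key P fun x hx h => (hpos x hx h).ne'
  have iN := key N fun x hx h => (hneg x hx h).ne
  have dP := LinearMap.finrank_le_finrank_of_injective iP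
  have dN := LinearMap.finrank_le_finrank_of_injective iN
  have hsum := Submodule.finrank_add_eq_of_isCompl hcompl
  rw [Module.finrank_prod, Subspace.dual_finrank_eq] at hsum
  have eP : Module.finrank ℝ P = Module.finrank ℝ V := by omega
  have eN : Module.finrank ℝ N = Module.finrank ℝ V := by omega
  let fP : P →ₗ[ℝ] V := (LinearMap.fst ℝ V (Module.Dual ℝ V)).comp P.subtype
  let fN : N →ₗ[ℝ] V := (LinearMap.fst ℝ V (Module.Dual ℝ V)).comp N.subtype
  have bP : Function.Bijective fP := by
    refine ⟨iP, LinearMap.range_eq_top.1 (Submodule.eq_top_of_finrank_eq ?_)⟩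
    rw [LinearMap.finrank_range_of_inj iP, eP]
  have bN : Function.Bijective fN := by
    refine ⟨iN, LinearMap.range_eq_top.1 (Submodule.eq_top_of_finrank_eq ?_)⟩
    rw [LinearMap.finrank_range_of_inj iN, eN]
  exact ⟨⟨LinearEquiv.ofBijective fP bP, fun g x hx => rfl⟩,
    ⟨LinearEquiv.ofBijective fN bN, fun g x hx => rfl⟩⟩
end

section
/- Let K be a field of characteristic zero, G a finite group, and V a finite-dimensional K[G]-module with a non-degenerate K-valued G-invariant symmetric bilinear form σ. Let W be a G-submodule of V that is isotropic (σ vanishes identically on W × W), and let W^⊥ = {v ∈ V : σ(v,w) = 0 for all w ∈ W}. Then σ induces a non-degenerate G-invariant symmetric form on the quotient module W^⊥/W, and there is an isomorphism of K[G]-modules with forms (an orthogonal decomposition): V ≅ Hyp(W) ⊕ (W^⊥/W), where Hyp(W) = W ⊕ W^D carries the form h(w⊕f, w'⊕f') = f(w') + f'(w). -/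
/-- The subspace of vectors orthogonal to a submodule `W` with respect to a bilinear
form `σ`. -/
def orthTo {K V : Type*} [Field K] [AddCommGroup V] [Module K V]
    (σ : LinearMap.BilinForm K V) (W : Submodule K V) : Submodule K V where
  carrier := {v | ∀ w ∈ W, σ v w = 0}
  add_mem' := by
    intro a b ha hb w hw
    rw [map_add, LinearMap.add_apply, ha w hw, hb w hw, add_zero]
  zero_mem' := by intro w hw; simp
  smul_mem' := by
    intro c x hx w hw
    rw [map_smul, LinearMap.smul_apply, hx w hw, smul_zero]

/-- If `σ` is `G`-invariant and `W` is `G`-stable, then `W^⊥` is `G`-stable. -/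
theorem orthTo_stable {K V G : Type*} [Field K] [AddCommGroup V] [Module K V] [Group G]
    (ρ : Representation K G V) (σ : LinearMap.BilinForm K V)
    (hσinv : ∀ (g : G) (x y : V), σ (ρ g x) (ρ g y) = σ x y)
    (W : Submodule K V) (hWstab : ∀ g : G, ∀ x ∈ W, ρ g x ∈ W) :
    ∀ g : G, ∀ x ∈ orthTo σ W, ρ g x ∈ orthTo σ W := by
  intro g x hx w hw
  have hfix : ρ g (ρ g⁻¹ w) = w := by
    have h1 : ρ g * ρ g⁻¹ = 1 := by rw [← map_mul, mul_inv_cancel, map_one]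
    calc ρ g (ρ g⁻¹ w) = (ρ g * ρ g⁻¹) w := rfl
      _ = w := by rw [h1]; rfl
  have : σ (ρ g x) (ρ g (ρ g⁻¹ w)) = 0 := by
    rw [hσinv]
    exact hx _ (hWstab g⁻¹ w hw)
  rwa [hfix] at this

/-- The `G`-action induced on the quotient `W^⊥ / W`. -/
def qAct {K V G : Type*} [Field K] [AddCommGroup V] [Module K V] [Group G]
    (ρ : Representation K G V) (σ : LinearMap.BilinForm K V)
    (hσinv : ∀ (g : G) (x y : V), σ (ρ g x) (ρ g y) = σ x y)
    (W : Submodule K V) (hWstab : ∀ g : G, ∀ x ∈ W, ρ g x ∈ W) (g : G) :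
    (↥(orthTo σ W) ⧸ W.comap (orthTo σ W).subtype) →ₗ[K]
      (↥(orthTo σ W) ⧸ W.comap (orthTo σ W).subtype) :=
  Submodule.mapQ _ _ ((ρ g).restrict (orthTo_stable ρ σ hσinv W hWstab g))
    (by
      intro x hx
      simp only [Submodule.mem_comap, Submodule.subtype_apply,
        LinearMap.restrict_coe_apply] at hx ⊢
      exact hWstab g _ hx)

/-- Maschke: an equivariant projection onto a stable subspace. -/
theorem exists_equivariant_proj {K V G : Type*} [Field K] [CharZero K]
    [AddCommGroup V] [Module K V] [Group G] [Finite G]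
    (ρ : Representation K G V) (P : Submodule K V) (hP : ∀ g : G, ∀ x ∈ P, ρ g x ∈ P) :
    ∃ r : V →ₗ[K] V, (∀ x, r x ∈ P) ∧ (∀ x ∈ P, r x = x) ∧
      ∀ (g : G) (x : V), r (ρ g x) = ρ g (r x) := by
  classical
  have := Fintype.ofFinite G
  obtain ⟨p, hp⟩ := P.subtype.exists_leftInverse_of_injective P.ker_subtype
  have hp' : ∀ x (hx : x ∈ P), ((p x : P) : V) = x := fun x hx => by
    have := LinearMap.congr_fun hp ⟨x, hx⟩
    exact congrArg Subtype.val this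
  have hmul : ∀ (g h : G) (x : V), ρ (g * h) x = ρ g (ρ h x) := fun g h x => by
    rw [map_mul]; rfl
  have hinv : ∀ (g : G) (x : V), ρ g (ρ g⁻¹ x) = x := fun g x => by
    rw [← hmul, mul_inv_cancel, map_one]; rfl
  let r : V →ₗ[K] V := (Fintype.card G : K)⁻¹ •
    ∑ h : G, (ρ h) ∘ₗ P.subtype ∘ₗ p ∘ₗ (ρ h⁻¹)
  have hr : ∀ x, r x = (Fintype.card G : K)⁻¹ • ∑ h : G, ρ h (p (ρ h⁻¹ x) : V) := fun x => by
    simp [r, LinearMap.sum_apply]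
  refine ⟨r, fun x => ?_, fun x hx => ?_, fun g x => ?_⟩
  · rw [hr]
    exact P.smul_mem _ (P.sum_mem fun h _ => hP h _ (p _).2)
  · rw [hr]
    have : ∀ h : G, ρ h (p (ρ h⁻¹ x) : V) = x := fun h => by
      rw [hp' _ (hP _ _ hx), hinv]
    simp only [this, Finset.sum_const, Finset.card_univ]
    rw [← Nat.cast_smul_eq_nsmul K, smul_smul, inv_mul_cancel₀, one_smul]
    exact Nat.cast_ne_zero.2 Fintype.card_ne_zero
  · rw [hr, hr, map_smul, map_sum]
    congr 1
    refine Fintype.sum_equiv (Equiv.mulLeft g⁻¹) _ _ fun h => ?_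
    simp only [Equiv.coe_mulLeft, mul_inv_rev, inv_inv, hmul, hinv]

/-- For an isotropic `G`-submodule `W` of a `K[G]`-module `V` with non-degenerate
`G`-invariant symmetric form `σ`, the form `σ` induces a non-degenerate `G`-invariant
symmetric form on `W^⊥ / W`, and there is an orthogonal `G`-decomposition
`V ≅ Hyp(W) ⊕ W^⊥/W`, where `Hyp(W) = W ⊕ W^D` carries the hyperbolic form. -/
theorem isotropic_hyperbolic_decomposition {K V G : Type*} [Field K] [CharZero K]
    [AddCommGroup V] [Module K V] [FiniteDimensional K V] [Group G] [Finite G]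
    (ρ : Representation K G V) (σ : LinearMap.BilinForm K V)
    (hσsymm : ∀ x y, σ x y = σ y x)
    (hσnd : LinearMap.BilinForm.Nondegenerate σ)
    (hσinv : ∀ (g : G) (x y : V), σ (ρ g x) (ρ g y) = σ x y)
    (W : Submodule K V) (hWstab : ∀ g : G, ∀ x ∈ W, ρ g x ∈ W)
    (hiso : ∀ x ∈ W, ∀ y ∈ W, σ x y = 0) :
    ∃ σQ : LinearMap.BilinForm K (↥(orthTo σ W) ⧸ W.comap (orthTo σ W).subtype),
      (∀ x y : ↥(orthTo σ W),
        σQ (Submodule.Quotient.mk x) (Submodule.Quotient.mk y) = σ ↑x ↑y) ∧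
      (∀ a b, σQ a b = σQ b a) ∧
      LinearMap.BilinForm.Nondegenerate σQ ∧
      (∀ (g : G) (a b : ↥(orthTo σ W) ⧸ W.comap (orthTo σ W).subtype),
        σQ (qAct ρ σ hσinv W hWstab g a) (qAct ρ σ hσinv W hWstab g b) = σQ a b) ∧
      ∃ e : V ≃ₗ[K]
          (↥W × Module.Dual K ↥W) × (↥(orthTo σ W) ⧸ W.comap (orthTo σ W).subtype),
        (∀ x y : V,
          σ x y = (e x).1.2 (e y).1.1 + (e y).1.2 (e x).1.1 + σQ (e x).2 (e y).2) ∧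
        (∀ (g : G) (x : V),
          e (ρ g x) =
            (((ρ g).restrict (hWstab g) (e x).1.1,
              (e x).1.2 ∘ₗ (ρ g⁻¹).restrict (hWstab g⁻¹)),
             qAct ρ σ hσinv W hWstab g (e x).2)) := by
  have hrefl : σ.IsRefl := fun x y h => by rw [hσsymm]; exact h
  have hPo : orthTo σ W = σ.orthogonal W := by
    ext v
    exact ⟨fun h w hw => (hσsymm w v).trans (h w hw), fun h w hw => (hσsymm v w).trans (h w hw)⟩
  have hPP : ∀ v, (∀ x ∈ orthTo σ W, σ x v = 0) → v ∈ W := fun v hv => by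
    rw [← LinearMap.BilinForm.orthogonal_orthogonal hσnd hrefl W, ← hPo]
    exact hv
  have hWP : W ≤ orthTo σ W := fun x hx w hw => hiso x hx w hw
  have hmul : ∀ (g h : G) (x : V), ρ (g * h) x = ρ g (ρ h x) := fun g h x => by
    rw [map_mul]; rfl
  have hinv : ∀ (g : G) (x : V), ρ g (ρ g⁻¹ x) = x := fun g x => by
    rw [← hmul, mul_inv_cancel, map_one]; rfl
  have hadj : ∀ (g : G) (x y : V), σ (ρ g x) y = σ x (ρ g⁻¹ y) := fun g x y => by
    rw [← hσinv g x, hinv]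
  obtain ⟨r, hrP, hrid, hrg⟩ := exists_equivariant_proj ρ (orthTo σ W)
    (orthTo_stable ρ σ hσinv W hWstab)
  -- the form on the quotient
  let N : Submodule K ↥(orthTo σ W) := W.comap (orthTo σ W).subtype
  let B : ↥(orthTo σ W) →ₗ[K] ↥(orthTo σ W) →ₗ[K] K :=
    (σ.domRestrict₁₂ (orthTo σ W) (orthTo σ W))
  let L : ↥(orthTo σ W) →ₗ[K] ((↥(orthTo σ W) ⧸ N) →ₗ[K] K) :=
    { toFun := fun x => N.liftQ (B x) (fun y hy => x.2 _ hy)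
      map_add' := fun x y => by
        ext z; exact congrArg (fun t => t z) (map_add B x y)
      map_smul' := fun c x => by
        ext z; exact congrArg (fun t => t z) (map_smul B c x) }
  let σQ : LinearMap.BilinForm K (↥(orthTo σ W) ⧸ N) := N.liftQ L (fun x hx => by
    rw [LinearMap.mem_ker]
    ext y
    exact (hσsymm _ _).trans (y.2 _ hx))
  have hQ : ∀ x y : ↥(orthTo σ W),
      σQ (Submodule.Quotient.mk x) (Submodule.Quotient.mk y) = σ ↑x ↑y := fun x y => rfl
  have hQs : ∀ a b, σQ a b = σQ b a := fun a b => by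
    obtain ⟨x, rfl⟩ := Submodule.Quotient.mk_surjective _ a
    obtain ⟨y, rfl⟩ := Submodule.Quotient.mk_surjective _ b
    rw [hQ, hQ, hσsymm]
  have hQl : ∀ a, (∀ b, σQ a b = 0) → a = 0 := fun a ha => by
    obtain ⟨x, rfl⟩ := Submodule.Quotient.mk_surjective _ a
    rw [Submodule.Quotient.mk_eq_zero]
    refine hPP _ fun y hy => ?_
    rw [hσsymm]
    exact ha (Submodule.Quotient.mk ⟨y, hy⟩)
  refine ⟨σQ, hQ, hQs, ⟨hQl, fun b hb => hQl b fun a => by rw [hQs]; exact hb a⟩,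
    fun g a b => ?_, ?_⟩
  · obtain ⟨x, rfl⟩ := Submodule.Quotient.mk_surjective _ a
    obtain ⟨y, rfl⟩ := Submodule.Quotient.mk_surjective _ b
    exact hσinv g x y
  -- the component in `W`
  let s := σ.leftAdjointOfNondegenerate hσnd r
  have hs : ∀ x y, σ (s x) y = σ x (r y) :=
    LinearMap.BilinForm.isAdjointPairLeftAdjointOfNondegenerate σ hσnd r
  let a0 : V →ₗ[K] V := (2⁻¹ : K) • ((LinearMap.id - s) ∘ₗ (LinearMap.id + r))
  have ha0 : ∀ x y, σ x (a0 y) = 2⁻¹ * σ (x - r x) (y + r y) := fun x y => by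
    have h1 : σ x (s (y + r y)) = σ (r x) (y + r y) := by
      rw [hσsymm, hs, hσsymm]
    have h2 : a0 y = (2⁻¹ : K) • ((y + r y) - s (y + r y)) := rfl
    rw [h2, map_smul, smul_eq_mul, map_sub, h1, map_sub σ, LinearMap.sub_apply]
  have ha0W : ∀ y, a0 y ∈ W := fun y => hPP _ fun x hx => by
    rw [ha0, hrid x hx, sub_self, map_zero, LinearMap.zero_apply, mul_zero]
  have ha0g : ∀ (g : G) y, a0 (ρ g y) = ρ g (a0 y) := fun g y => by
    rw [← sub_eq_zero]
    refine hσnd.2 _ fun x => ?_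
    rw [map_sub, sub_eq_zero, ha0, hσsymm x, hadj, hσsymm (a0 y), ha0, hrg, hrg, ← map_sub,
      ← map_add, hσsymm _ (ρ g _), hadj, hσsymm (y + r y)]
  let a : V →ₗ[K] W := a0.codRestrict W ha0W
  let f : V →ₗ[K] Module.Dual K W := σ.domRestrict₁₂ ⊤ W ∘ₗ LinearMap.codRestrict ⊤ LinearMap.id (fun _ => trivial)
  let q : V →ₗ[K] (↥(orthTo σ W) ⧸ N) := N.mkQ ∘ₗ r.codRestrict (orthTo σ W) hrP
  let E : V →ₗ[K] (↥W × Module.Dual K ↥W) × (↥(orthTo σ W) ⧸ N) := (a.prod f).prod q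
  have hE : ∀ x y : V,
      σ x y = (E x).1.2 (E y).1.1 + (E y).1.2 (E x).1.1 + σQ (E x).2 (E y).2 := fun x y => by
    change σ x y = σ x (a0 y) + σ y (a0 x) + σ (r x) (r y)
    rw [ha0, ha0]
    simp only [map_add, map_sub, LinearMap.sub_apply]
    rw [hσsymm y x, hσsymm y (r x), hσsymm (r y) x, hσsymm (r y) (r x)]
    field_simp
    ring
  have hEinj : Function.Injective E := by
    rw [injective_iff_map_eq_zero]
    intro x hx
    refine hσnd.1 _ fun y => ?_
    rw [hE, hx]
    simp
  have hdim : Module.finrank K V =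
      Module.finrank K ((↥W × Module.Dual K ↥W) × (↥(orthTo σ W) ⧸ N)) := by
    have h1 := N.finrank_quotient_add_finrank
    have h2 : Module.finrank K N = Module.finrank K W :=
      (Submodule.comapSubtypeEquivOfLe hWP).finrank_eq
    have h3 := LinearMap.BilinForm.finrank_orthogonal hσnd W
    have h4 := W.finrank_le
    rw [← hPo] at h3
    rw [Module.finrank_prod, Module.finrank_prod, Subspace.dual_finrank_eq]
    omega
  refine ⟨E.linearEquivOfInjective hEinj hdim, fun x y => ?_, fun g x => ?_⟩
  · simp only [LinearMap.linearEquivOfInjective_apply]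
    exact hE x y
  · simp only [LinearMap.linearEquivOfInjective_apply]
    refine Prod.ext (Prod.ext ?_ ?_) ?_
    · exact Subtype.ext (ha0g g x)
    · ext w
      exact hadj g x w
    · change Submodule.Quotient.mk _ = Submodule.Quotient.mk _
      congr 1
      exact Subtype.ext (hrg g x)
end

section
/- Let K be a field of characteristic zero, G a finite group, and (V,σ) a finite-dimensional K[G]-module with a non-degenerate K-valued G-invariant symmetric bilinear form. Suppose (V,σ) is a filtered quadratic K[G]-space: there is an increasing filtration {F_i}_{i∈ℤ} of V by K[G]-submodules with F_{-N} = 0 and F_N = V for N sufficiently large, and with F_i^⊥ = F_{-i-1} for all i (where F_i^⊥ = {v : σ(v,x)=0 for all x ∈ F_i}). Let Gr_i = F_i/F_{i-1}. Then σ induces a non-degenerate G-invariant symmetric form on Gr_0 = F_0/F_{-1}, and there is a (non-canonical) isomorphism of K[G]-modules with forms: V ≅ (⊕_{i<0} Hyp(Gr_i)) ⊕ Gr_0. -/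
/-- The `i`-th graded piece `Gr_i = F_i / F_{i-1}` of a filtration `F` by submodules. -/
abbrev Gr {K V : Type*} [Field K] [AddCommGroup V] [Module K V]
    (F : ℤ → Submodule K V) (i : ℤ) : Type _ :=
  ↥(F i) ⧸ (F (i - 1)).comap (F i).subtype

/-- The `G`-action induced on the graded piece `Gr_i = F_i / F_{i-1}` of a `G`-stable
filtration. -/
def grAct {K V G : Type*} [Field K] [AddCommGroup V] [Module K V] [Group G]
    (ρ : Representation K G V) (F : ℤ → Submodule K V)
    (hstab : ∀ (g : G) (i : ℤ), ∀ x ∈ F i, ρ g x ∈ F i) (i : ℤ) (g : G) :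
    Gr F i →ₗ[K] Gr F i :=
  Submodule.mapQ _ _ ((ρ g).restrict (hstab g i))
    (by
      intro x hx
      simp only [Submodule.mem_comap, Submodule.subtype_apply,
        LinearMap.restrict_coe_apply] at hx ⊢
      exact hstab g (i - 1) _ hx)

theorem fqd_exists_proj {K V G : Type*} [Field K] [CharZero K]
    [AddCommGroup V] [Module K V] [Group G] [Finite G]
    (ρ : Representation K G V) (W : Submodule K V)
    (hW : ∀ (g : G), ∀ x ∈ W, ρ g x ∈ W) :
    ∃ π : V →ₗ[K] W, (∀ x : W, π x = x) ∧ ∀ g x, (π (ρ g x) : V) = ρ g (π x) := by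
  classical
  have := Fintype.ofFinite G
  obtain ⟨p, hp⟩ := LinearMap.exists_leftInverse_of_injective W.subtype W.ker_subtype
  have hp' : ∀ x : W, p x = x := fun x => LinearMap.congr_fun hp x
  have hc : (Fintype.card G : K) ≠ 0 := by exact_mod_cast Fintype.card_ne_zero
  refine ⟨(Fintype.card G : K)⁻¹ • ∑ g : G, ((ρ g).restrict (hW g)) ∘ₗ p ∘ₗ ρ g⁻¹, ?_, ?_⟩
  · intro x
    have : ∀ g : G, (((ρ g).restrict (hW g)) ∘ₗ p ∘ₗ ρ g⁻¹) (x : V) = x := by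
      intro g
      have h := hp' ⟨ρ g⁻¹ x, hW _ _ x.2⟩
      simp only at h
      apply Subtype.ext
      simp [h]
    simp only [LinearMap.smul_apply, LinearMap.sum_apply, this]
    simp [← Nat.cast_smul_eq_nsmul K, smul_smul, hc]
  · intro g x
    simp only [LinearMap.smul_apply, LinearMap.sum_apply, Submodule.coe_smul, map_smul,
      Submodule.coe_sum, map_sum]
    congr 1
    refine Fintype.sum_equiv (Equiv.mulLeft g⁻¹) _ _ ?_
    intro h
    simp [← Module.End.mul_apply, ← map_mul]

theorem fqd_grAct_mk {K V G : Type*} [Field K] [AddCommGroup V] [Module K V] [Group G]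
    (ρ : Representation K G V) (F : ℤ → Submodule K V)
    (hstab : ∀ (g : G) (i : ℤ), ∀ x ∈ F i, ρ g x ∈ F i) (i : ℤ) (g : G) (x : F i) :
    grAct ρ F hstab i g (Submodule.Quotient.mk x) =
      Submodule.Quotient.mk ⟨ρ g x, hstab g i x x.2⟩ := rfl

theorem fqd_finrank_gr {K V : Type*} [Field K] [AddCommGroup V] [Module K V]
    [FiniteDimensional K V] (F : ℤ → Submodule K V) (hmono : Monotone F) (i : ℤ) :
    Module.finrank K (Gr F i) + Module.finrank K (F (i - 1)) = Module.finrank K (F i) := by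
  have h := Submodule.finrank_quotient_add_finrank ((F (i - 1)).comap (F i).subtype)
  rw [← h]
  congr 1
  exact (LinearEquiv.finrank_eq
    (Submodule.comapSubtypeEquivOfLe (hmono (by lia : i - 1 ≤ i)))).symm

theorem fqd_split {K V G : Type*} [Field K] [CharZero K]
    [AddCommGroup V] [Module K V] [FiniteDimensional K V] [Group G] [Finite G]
    (ρ : Representation K G V)
    (F : ℤ → Submodule K V) (hmono : Monotone F)
    (hstab : ∀ (g : G) (i : ℤ), ∀ x ∈ F i, ρ g x ∈ F i)
    (Nn : ℕ) (hbot : F (-(Nn : ℤ)) = ⊥) :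
    ∃ φ : F (-1) ≃ₗ[K] ((j : Fin Nn) → Gr F (-(j : ℤ) - 1)),
      ∀ (g : G) (x : F (-1)) (j : Fin Nn),
        φ ⟨ρ g x, hstab g _ x x.2⟩ j = grAct ρ F hstab _ g (φ x j) := by
  choose π hπ hπg using fun i => fqd_exists_proj ρ (F i) (fun g => hstab g i)
  let f : F (-1) →ₗ[K] ((j : Fin Nn) → Gr F (-(j : ℤ) - 1)) :=
    LinearMap.pi fun j => (Submodule.mkQ _) ∘ₗ π (-(j : ℤ) - 1) ∘ₗ (F (-1)).subtype
  have hf : ∀ x j, f x j = Submodule.Quotient.mk (π (-(j : ℤ) - 1) x) := fun x j => rfl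
  have hinj : Function.Injective f := by
    rw [injective_iff_map_eq_zero]
    intro x hx
    have key : ∀ n : ℕ, n ≤ Nn → (x : V) ∈ F (-(n : ℤ) - 1) := by
      intro n
      induction n with
      | zero => intro _; simpa using x.2
      | succ n ih =>
        intro hn
        have h1 := ih (by lia)
        have h2 := congrFun hx ⟨n, by lia⟩
        rw [hf] at h2
        have h3 := hπ (-(n : ℤ) - 1) ⟨x, h1⟩
        simp only [Pi.zero_apply] at h2 h3
        rw [h3, Submodule.Quotient.mk_eq_zero] at h2
        have h4 : (x : V) ∈ F (-(n : ℤ) - 1 - 1) := h2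
        have : (-((n + 1 : ℕ) : ℤ) - 1) = -(n : ℤ) - 1 - 1 := by push_cast; ring
        rwa [this]
    have h := hmono (by lia : -(Nn : ℤ) - 1 ≤ -(Nn : ℤ)) (key Nn le_rfl)
    rw [hbot] at h
    exact Subtype.ext (by simpa using h)
  have hdim : Module.finrank K (F (-1)) =
      Module.finrank K ((j : Fin Nn) → Gr F (-(j : ℤ) - 1)) := by
    rw [Module.finrank_pi_fintype]
    have key : ∀ n : ℕ, (∑ j : Fin n, Module.finrank K (Gr F (-(j : ℤ) - 1)))
        + Module.finrank K (F (-(n : ℤ) - 1)) = Module.finrank K (F (-1)) := by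
      intro n
      induction n with
      | zero => simp
      | succ n ih =>
        rw [Fin.sum_univ_castSucc, ← ih]
        have h := fqd_finrank_gr F hmono (-(n : ℤ) - 1)
        have : (-((n + 1 : ℕ) : ℤ) - 1) = -(n : ℤ) - 1 - 1 := by push_cast; ring
        rw [this]
        simp only [Fin.val_castSucc, Fin.val_last]
        exact (add_assoc _ _ _).trans (congrArg _ h)
    have h0 : F (-(Nn : ℤ) - 1) = ⊥ := by
      have := hmono (by lia : -(Nn : ℤ) - 1 ≤ -(Nn : ℤ))
      rw [hbot] at this
      exact le_bot_iff.mp this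
    rw [← key Nn, h0]
    simp
  refine ⟨LinearEquiv.ofInjectiveOfFinrankEq f hinj hdim, ?_⟩
  intro g x j
  change f _ j = grAct ρ F hstab _ g (f x j)
  rw [hf, hf, fqd_grAct_mk]
  congr 1
  exact Subtype.ext (hπg _ g x)

/-- For a filtered quadratic `K[G]`-space `(V, σ)` with filtration `{F i}` satisfying
`F i ^⊥ = F (-i-1)`, the form `σ` induces a non-degenerate `G`-invariant symmetric form
on `Gr 0 = F 0 / F (-1)`, and there is a (non-canonical) `G`-equivariant isometry
`V ≅ (⊕_{i<0} Hyp (Gr i)) ⊕ Gr 0`, where `Hyp (Gr i) = Gr i ⊕ (Gr i)^D` carries the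
hyperbolic form. -/
theorem filtered_quadratic_decomposition {K V G : Type*} [Field K] [CharZero K]
    [AddCommGroup V] [Module K V] [FiniteDimensional K V] [Group G] [Finite G]
    (ρ : Representation K G V) (σ : LinearMap.BilinForm K V)
    (hσsymm : ∀ x y, σ x y = σ y x)
    (hσnd : LinearMap.BilinForm.Nondegenerate σ)
    (hσinv : ∀ (g : G) (x y : V), σ (ρ g x) (ρ g y) = σ x y)
    (F : ℤ → Submodule K V) (hmono : Monotone F)
    (hstab : ∀ (g : G) (i : ℤ), ∀ x ∈ F i, ρ g x ∈ F i)
    (Nn : ℕ) (hbot : F (-(Nn : ℤ)) = ⊥) (htop : F (Nn : ℤ) = ⊤)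
    (horth : ∀ i : ℤ, orthTo σ (F i) = F (-i - 1)) :
    ∃ σ0 : LinearMap.BilinForm K (Gr F 0),
      (∀ x y : ↥(F 0),
        σ0 (Submodule.Quotient.mk x) (Submodule.Quotient.mk y) = σ ↑x ↑y) ∧
      (∀ a b, σ0 a b = σ0 b a) ∧
      LinearMap.BilinForm.Nondegenerate σ0 ∧
      (∀ (g : G) (a b : Gr F 0),
        σ0 (grAct ρ F hstab 0 g a) (grAct ρ F hstab 0 g b) = σ0 a b) ∧
      ∃ e : V ≃ₗ[K]
          ((j : Fin Nn) → (Gr F (-(j : ℤ) - 1) × Module.Dual K (Gr F (-(j : ℤ) - 1))))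
            × Gr F 0,
        (∀ x y : V,
          σ x y =
            (∑ j : Fin Nn,
              (((e x).1 j).2 ((e y).1 j).1 + ((e y).1 j).2 ((e x).1 j).1))
              + σ0 (e x).2 (e y).2) ∧
        (∀ (g : G) (x : V),
          e (ρ g x) =
            (fun (j : Fin Nn) =>
              (grAct ρ F hstab (-(j : ℤ) - 1) g ((e x).1 j).1,
               ((e x).1 j).2 ∘ₗ grAct ρ F hstab (-(j : ℤ) - 1) g⁻¹),
             grAct ρ F hstab 0 g (e x).2)) := by
  classical
  have horth' : ∀ i v, v ∈ F (-i - 1) ↔ ∀ w ∈ F i, σ v w = 0 := by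
    intro i v; rw [← horth i]; rfl
  have hm1 : ∀ v, v ∈ F (-1) ↔ ∀ w ∈ F 0, σ v w = 0 := fun v => by simpa using horth' 0 v
  have h00 : ∀ v, v ∈ F 0 ↔ ∀ w ∈ F (-1), σ v w = 0 := fun v => by simpa using horth' (-1) v
  have hinj : ∀ x, (∀ y, σ x y = 0) → x = 0 := hσnd.1
  obtain ⟨s, hs⟩ := LinearMap.exists_rightInverse_of_surjective
    (Submodule.mkQ ((F (0 - 1)).comap (F 0).subtype)) (Submodule.range_mkQ _)
  have hs' : ∀ x : F 0, ((s (Submodule.Quotient.mk x) : F 0) : V) - x ∈ F (-1) := by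
    intro x
    have h := LinearMap.congr_fun hs (Submodule.Quotient.mk x)
    exact (Submodule.Quotient.eq ((F (0 - 1)).comap (F 0).subtype)).mp h
  obtain ⟨σ0, hσ0def⟩ : ∃ σ0 : LinearMap.BilinForm K (Gr F 0),
      ∀ a b, σ0 a b = σ (s a : F 0) (s b : F 0) :=
    ⟨LinearMap.compl₁₂ σ ((F 0).subtype ∘ₗ s) ((F 0).subtype ∘ₗ s), fun a b => rfl⟩
  have hσ0 : ∀ x y : F 0,
      σ0 (Submodule.Quotient.mk x) (Submodule.Quotient.mk y) = σ ↑x ↑y := by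
    intro x y
    rw [hσ0def]
    have h1 := (hm1 _).1 (hs' x) (s (Submodule.Quotient.mk y) : F 0) (Subtype.mem _)
    have h2 := (hm1 _).1 (hs' y) x x.2
    rw [map_sub, LinearMap.sub_apply, sub_eq_zero] at h1 h2
    rw [h1, hσsymm, h2, hσsymm]
  have hσ0symm : ∀ a b, σ0 a b = σ0 b a := by
    intro a b; rw [hσ0def, hσ0def, hσsymm]
  have hσ0sep : ∀ a, (∀ b, σ0 a b = 0) → a = 0 := by
    intro a
    obtain ⟨x, rfl⟩ := Submodule.Quotient.mk_surjective _ a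
    intro h
    rw [Submodule.Quotient.mk_eq_zero]
    change (x : V) ∈ F (-1)
    rw [hm1]
    intro w hw
    have := h (Submodule.Quotient.mk ⟨w, hw⟩)
    rwa [hσ0] at this
  have hσ0inv : ∀ (g : G) (a b : Gr F 0),
      σ0 (grAct ρ F hstab 0 g a) (grAct ρ F hstab 0 g b) = σ0 a b := by
    intro g a b
    obtain ⟨x, rfl⟩ := Submodule.Quotient.mk_surjective _ a
    obtain ⟨y, rfl⟩ := Submodule.Quotient.mk_surjective _ b
    rw [fqd_grAct_mk, fqd_grAct_mk, hσ0, hσ0, hσinv]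
  refine ⟨σ0, hσ0, hσ0symm, ⟨hσ0sep, fun b h => hσ0sep b fun a => by rw [hσ0symm]; exact h a⟩,
    hσ0inv, ?_⟩
  obtain ⟨φ, hφ⟩ := fqd_split ρ F hmono hstab Nn hbot
  obtain ⟨Q, hQ, hQg⟩ := fqd_exists_proj ρ (F 0) (fun g => hstab g 0)
  -- the map to `Gr 0`
  obtain ⟨q, hq⟩ : ∃ q : V →ₗ[K] Gr F 0, ∀ x, q x = Submodule.Quotient.mk (Q x) :=
    ⟨Submodule.mkQ _ ∘ₗ Q, fun _ => rfl⟩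
  have hqg : ∀ g x, q (ρ g x) = grAct ρ F hstab 0 g (q x) := by
    intro g x
    rw [hq, hq, fqd_grAct_mk]
    congr 1
    exact Subtype.ext (hQg g x)
  -- the defect form
  obtain ⟨B, hB⟩ : ∃ B : LinearMap.BilinForm K V, ∀ x y, B x y = σ x y - σ0 (q x) (q y) :=
    ⟨σ - LinearMap.compl₁₂ σ0 q q, fun _ _ => rfl⟩
  have hBsymm : ∀ x y, B x y = B y x := fun x y => by rw [hB, hB, hσsymm, hσ0symm]
  have hBg : ∀ g x y, B (ρ g x) (ρ g y) = B x y := fun g x y => by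
    rw [hB, hB, hσinv, hqg, hqg, hσ0inv]
  have hB0 : ∀ x y : F 0, B x y = 0 := by
    intro x y
    rw [hB, hq, hq, hQ, hQ, hσ0, sub_self]
  obtain ⟨R, hR⟩ : ∃ R : V →ₗ[K] V, ∀ x, R x = x - Q x :=
    ⟨LinearMap.id - (F 0).subtype ∘ₗ Q, fun _ => rfl⟩
  have hRg : ∀ g x, R (ρ g x) = ρ g (R x) := fun g x => by
    rw [hR, hR, hQg, map_sub]
  have hR0 : ∀ x ∈ F 0, R x = 0 := fun x hx => by
    have := hQ ⟨x, hx⟩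
    simp only at this
    rw [hR, this, sub_self]
  obtain ⟨S, hS⟩ : ∃ S : V →ₗ[K] V, ∀ x, S x = Q x + (2⁻¹ : K) • R x :=
    ⟨(F 0).subtype ∘ₗ Q + (2⁻¹ : K) • R, fun _ => rfl⟩
  have hSg : ∀ g x, S (ρ g x) = ρ g (S x) := fun g x => by
    rw [hS, hS, hQg, hRg, map_add, map_smul]
  obtain ⟨a0, ha0⟩ : ∃ a0 : V →ₗ[K] V, ∀ x y, σ (a0 y) x = B (S y) (R x) :=
    ⟨(LinearMap.BilinForm.toDual σ hσnd).symm.toLinearMap ∘ₗ LinearMap.compl₁₂ B S R,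
      fun x y => by
        simp [LinearMap.BilinForm.apply_toDual_symm_apply]⟩
  have ha0mem : ∀ y, a0 y ∈ F (-1) := by
    intro y
    rw [hm1]
    intro w hw
    rw [ha0, hR0 w hw, map_zero]
  obtain ⟨a, ha⟩ : ∃ a : V →ₗ[K] F (-1), ∀ x, (a x : V) = a0 x :=
    ⟨a0.codRestrict _ ha0mem, fun _ => rfl⟩
  have hσg : ∀ g x y, σ (ρ g x) y = σ x (ρ g⁻¹ y) := by
    intro g x y
    rw [← hσinv g x (ρ g⁻¹ y)]
    simp
  have hag : ∀ g x, a (ρ g x) = ⟨ρ g (a x), hstab g _ _ (a x).2⟩ := by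
    intro g x
    apply Subtype.ext
    simp only [ha]
    rw [← sub_eq_zero]
    apply hinj
    intro y
    rw [map_sub, LinearMap.sub_apply, ha0, hσg, ha0, hSg, hRg, sub_eq_zero,
      ← hBg g (S x) _]
    simp
  have hsum : ∀ x y, σ x (a y) + σ y (a x) = B x y := by
    intro x y
    rw [hσsymm x, hσsymm y, ha, ha, ha0, ha0]
    have e1 : ∀ z, z = (Q z : V) + R z := fun z => by rw [hR]; abel
    have : B x y = B ((Q x : V) + R x) ((Q y : V) + R y) := by rw [← e1, ← e1]
    rw [this, hS, hS]
    simp only [map_add, map_smul, LinearMap.add_apply, LinearMap.smul_apply, hB0, smul_eq_mul]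
    rw [hBsymm (R y) (R x), hBsymm (Q y) (R x)]
    ring
  -- the pairing map
  obtain ⟨c, hc⟩ : ∃ c : V →ₗ[K] Module.Dual K (F (-1)), ∀ x (l : F (-1)), c x l = σ x l :=
    ⟨LinearMap.compl₂ σ (F (-1)).subtype, fun _ _ => rfl⟩
  obtain ⟨f, hf⟩ : ∃ f : V →ₗ[K]
      ((j : Fin Nn) → (Gr F (-(j : ℤ) - 1) × Module.Dual K (Gr F (-(j : ℤ) - 1)))) × Gr F 0,
      ∀ x, f x = (fun j => (φ (a x) j,
        (c x) ∘ₗ φ.symm.toLinearMap ∘ₗ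
          LinearMap.single K (fun j : Fin Nn => Gr F (-(j : ℤ) - 1)) j), q x) :=
    ⟨LinearMap.prod (LinearMap.pi fun j => LinearMap.prod
        (LinearMap.proj j ∘ₗ φ.toLinearMap ∘ₗ a)
        (LinearMap.lcomp K K (φ.symm.toLinearMap ∘ₗ
          LinearMap.single K (fun j : Fin Nn => Gr F (-(j : ℤ) - 1)) j) ∘ₗ c)) q,
      fun _ => rfl⟩
  have hpair : ∀ x (l : F (-1)), ∑ j : Fin Nn, c x (φ.symm
      (LinearMap.single K (fun j : Fin Nn => Gr F (-(j : ℤ) - 1)) j (φ l j))) = σ x l := by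
    intro x l
    rw [← map_sum, ← map_sum]
    have : ∑ j : Fin Nn, LinearMap.single K (fun j : Fin Nn => Gr F (-(j : ℤ) - 1)) j (φ l j)
        = φ l := by
      simp [LinearMap.single_apply, Finset.univ_sum_single]
    rw [this, φ.symm_apply_apply, hc]
  have hform : ∀ x y : V, σ x y = (∑ j : Fin Nn,
      (((f x).1 j).2 ((f y).1 j).1 + ((f y).1 j).2 ((f x).1 j).1))
        + σ0 (f x).2 (f y).2 := by
    intro x y
    simp only [hf, LinearMap.comp_apply, LinearEquiv.coe_coe]
    rw [Finset.sum_add_distrib, hpair, hpair, hsum, hB]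
    ring
  have hfinj : Function.Injective f := by
    rw [injective_iff_map_eq_zero]
    intro x hx
    apply hinj
    intro y
    rw [hform, hx]
    simp
  have hdim : Module.finrank K V = Module.finrank K
      (((j : Fin Nn) → (Gr F (-(j : ℤ) - 1) × Module.Dual K (Gr F (-(j : ℤ) - 1))))
        × Gr F 0) := by
    rw [Module.finrank_prod, Module.finrank_pi_fintype]
    simp only [Module.finrank_prod, Subspace.dual_finrank_eq]
    rw [Finset.sum_add_distrib]
    have h1 := φ.finrank_eq
    rw [Module.finrank_pi_fintype] at h1
    rw [← h1]
    have h2 := fqd_finrank_gr F hmono 0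
    have h3 := LinearMap.BilinForm.finrank_orthogonal hσnd (F 0)
    have h4 : LinearMap.BilinForm.orthogonal σ (F 0) = F (-1) := by
      ext v
      rw [hm1, LinearMap.BilinForm.mem_orthogonal_iff]
      exact forall₂_congr fun w _ => by rw [hσsymm v w]
    rw [h4] at h3
    have h5 := Submodule.finrank_le (F 0)
    change Module.finrank K (Gr F 0) + Module.finrank K (F (-1)) = _ at h2
    omega
  refine ⟨LinearEquiv.ofInjectiveOfFinrankEq f hfinj hdim, hform, ?_⟩
  intro g x
  change f (ρ g x) = (fun (j : Fin Nn) =>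
              (grAct ρ F hstab (-(j : ℤ) - 1) g ((f x).1 j).1,
               ((f x).1 j).2 ∘ₗ grAct ρ F hstab (-(j : ℤ) - 1) g⁻¹),
             grAct ρ F hstab 0 g (f x).2)
  simp only [hf]
  rw [hqg]
  congr 1
  funext j
  congr 1
  · rw [hag, hφ]
  · refine LinearMap.ext fun u => ?_
    simp only [LinearMap.comp_apply, LinearEquiv.coe_coe, hc]
    rw [hσg]
    congr 1
    set l := φ.symm (LinearMap.single K (fun j : Fin Nn => Gr F (-(j : ℤ) - 1)) j u) with hl
    have hl' : φ l = LinearMap.single K (fun j : Fin Nn => Gr F (-(j : ℤ) - 1)) j u := by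
      rw [hl, φ.apply_symm_apply]
    have : (⟨ρ g⁻¹ l, hstab _ _ _ l.2⟩ : F (-1)) =
        φ.symm (LinearMap.single K (fun j : Fin Nn => Gr F (-(j : ℤ) - 1)) j
          (grAct ρ F hstab (-(j : ℤ) - 1) g⁻¹ u)) := by
      rw [LinearEquiv.eq_symm_apply]
      funext k
      rw [hφ, hl']
      by_cases hk : k = j
      · subst hk; simp
      · simp [hk]
    exact congrArg Subtype.val this
end
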